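/- In the linear conjugate-Gaussian setting, the expected information gain — the expectation over data y of the KL divergence from the prior N(μ_pr, Σ_pr) to the posterior N(μ_pos(y), Σ_pos) — equals ½ log det(Gᵀ Σ_ε⁻¹ G Σ_pr + I_d). -/

import Mathlib

open Matrix Real MeasureTheory

/-- The density of the multivariate Gaussian N(μ, S) on ℝⁿ. -/
noncomputable def gaussPdf {n : ℕ} (μ : Fin n → ℝ) (S : Matrix (Fin n) (Fin n) ℝ)
    (x : Fin n → ℝ) : ℝ :=
  (Real.sqrt ((2 * Real.pi) ^ n * S.det))⁻¹ *
    Real.exp (-(1/2) * ((x - μ) ⬝ᵥ (S⁻¹ *ᵥ (x - μ))))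

/-- One-dimensional standard Gaussian density. -/
noncomputable def phi (x : ℝ) : ℝ := ProbabilityTheory.gaussianPDFReal 0 1 x

lemma phi_mom2 : ∫ x : ℝ, x ^ 2 * phi x = 1 := by
  have h := ProbabilityTheory.variance_id_gaussianReal (μ := 0) (v := 1)
  rw [ProbabilityTheory.variance_of_integral_eq_zero aemeasurable_id
    (by simpa using ProbabilityTheory.integral_id_gaussianReal (μ := 0) (v := 1)),
    ProbabilityTheory.integral_gaussianReal_eq_integral_smul one_ne_zero] at h
  simpa [phi, mul_comm] using h

lemma phi_mom1 : ∫ x : ℝ, x * phi x = 0 := by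
  have h := ProbabilityTheory.integral_id_gaussianReal (μ := 0) (v := 1)
  rw [ProbabilityTheory.integral_gaussianReal_eq_integral_smul one_ne_zero] at h
  simpa [phi, mul_comm] using h

lemma phi_mom0 : ∫ x : ℝ, phi x = 1 :=
  ProbabilityTheory.integral_gaussianPDFReal_eq_one 0 one_ne_zero

lemma phi_int0 : Integrable phi := ProbabilityTheory.integrable_gaussianPDFReal 0 1

lemma phi_int2 : Integrable (fun x : ℝ => x ^ 2 * phi x) := by
  by_contra h
  have := integral_undef h
  rw [phi_mom2] at this
  exact one_ne_zero this

lemma phi_nonneg (x : ℝ) : 0 ≤ phi x := ProbabilityTheory.gaussianPDFReal_nonneg 0 1 x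

lemma phi_int1 : Integrable (fun x : ℝ => x * phi x) := by
  refine (phi_int0.add phi_int2).mono' ?_ (Filter.Eventually.of_forall fun x => ?_)
  · exact (measurable_id.mul
      (ProbabilityTheory.measurable_gaussianPDFReal 0 1)).aestronglyMeasurable
  · have h := phi_nonneg x
    simp only [Pi.add_apply, norm_mul, Real.norm_eq_abs, abs_of_nonneg h]
    have : |x| ≤ 1 + x ^ 2 := by
      rw [abs_le]; constructor <;> nlinarith [sq_nonneg (x - 1), sq_nonneg (x + 1)]
    nlinarith

/-- Product standard Gaussian density. -/
noncomputable def phiN {n : ℕ} (z : Fin n → ℝ) : ℝ := ∏ k, phi (z k)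

lemma phiN_int_prod {n : ℕ} (e : Fin n → ℕ) (he : ∀ k, e k ≤ 2) :
    Integrable (fun z : Fin n → ℝ => (∏ k, z k ^ e k) * phiN z) := by
  have : (fun z : Fin n → ℝ => (∏ k, z k ^ e k) * phiN z) =
      fun z => ∏ k, (fun x : ℝ => x ^ e k * phi x) (z k) := by
    funext z; simp [phiN, Finset.prod_mul_distrib]
  rw [this]
  refine Integrable.fintype_prod (f := fun k (x : ℝ) => x ^ e k * phi x) fun k => ?_
  have := he k
  interval_cases h : e k
  · simpa using phi_int0
  · simpa using phi_int1
  · exact phi_int2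

lemma phiN_integral_prod {n : ℕ} (e : Fin n → ℕ) :
    ∫ z : Fin n → ℝ, (∏ k, z k ^ e k) * phiN z = ∏ k, ∫ x : ℝ, x ^ e k * phi x := by
  rw [← integral_fintype_prod_volume_eq_prod (fun k (x : ℝ) => x ^ e k * phi x)]
  simp [phiN, Finset.prod_mul_distrib]

lemma prod_pow_single {n : ℕ} (z : Fin n → ℝ) (i : Fin n) :
    ∏ k, z k ^ (Pi.single i 1 : Fin n → ℕ) k = z i := by
  rw [Finset.prod_eq_single i]
  · simp
  · intro b _ hb; simp [Pi.single_eq_of_ne hb]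
  · simp

lemma prod_pow_single2 {n : ℕ} (z : Fin n → ℝ) (i j : Fin n) :
    ∏ k, z k ^ (Pi.single i 1 + Pi.single j 1 : Fin n → ℕ) k = z i * z j := by
  simp only [Pi.add_apply, pow_add, Finset.prod_mul_distrib, prod_pow_single]

lemma single_le {n : ℕ} (i k : Fin n) : (Pi.single i 1 : Fin n → ℕ) k ≤ 1 := by
  by_cases h : k = i
  · subst h; simp
  · simp [Pi.single_eq_of_ne h]

lemma phiN_int0 {n : ℕ} : Integrable (phiN (n := n)) := by
  simpa using phiN_int_prod (n := n) 0 (by simp)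

lemma phiN_mom0 {n : ℕ} : ∫ z : Fin n → ℝ, phiN z = 1 := by
  simpa [phi_mom0] using phiN_integral_prod (n := n) 0

lemma phiN_int1 {n : ℕ} (i : Fin n) : Integrable (fun z : Fin n → ℝ => z i * phiN z) := by
  simpa only [prod_pow_single] using
    phiN_int_prod (Pi.single i 1) (fun k => (single_le i k).trans one_le_two)

lemma phiN_mom1 {n : ℕ} (i : Fin n) : ∫ z : Fin n → ℝ, z i * phiN z = 0 := by
  have h := phiN_integral_prod (Pi.single i 1)
  simp only [prod_pow_single] at h
  rw [h]
  exact Finset.prod_eq_zero (Finset.mem_univ i) (by simpa using phi_mom1)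

lemma phiN_int2 {n : ℕ} (i j : Fin n) :
    Integrable (fun z : Fin n → ℝ => z i * z j * phiN z) := by
  have h := phiN_int_prod (Pi.single i 1 + Pi.single j 1 : Fin n → ℕ)
    (fun k => add_le_add (single_le i k) (single_le j k))
  have e : (fun z : Fin n → ℝ => z i * z j * phiN z) = fun z =>
      (∏ k, z k ^ (Pi.single i 1 + Pi.single j 1 : Fin n → ℕ) k) * phiN z := by
    funext z; rw [prod_pow_single2]
  rw [e]
  exact h

lemma phiN_mom2 {n : ℕ} (i j : Fin n) :
    ∫ z : Fin n → ℝ, z i * z j * phiN z = if i = j then 1 else 0 := by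
  have h := phiN_integral_prod (Pi.single i 1 + Pi.single j 1)
  simp only [prod_pow_single2] at h
  rw [h]
  split_ifs with hij
  · subst hij
    refine Finset.prod_eq_one fun k _ => ?_
    by_cases hk : k = i
    · subst hk; simpa using phi_mom2
    · simpa [Pi.single_eq_of_ne hk] using phi_mom0
  · refine Finset.prod_eq_zero (Finset.mem_univ i) ?_
    simpa [Pi.single_eq_of_ne hij] using phi_mom1

lemma phiN_quad {n : ℕ} (c : ℝ) (v : Fin n → ℝ) (A : Matrix (Fin n) (Fin n) ℝ) :
    ∫ z : Fin n → ℝ, (c + v ⬝ᵥ z + z ⬝ᵥ (A *ᵥ z)) * phiN z = c + A.trace := by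
  have e : (fun z : Fin n → ℝ => (c + v ⬝ᵥ z + z ⬝ᵥ (A *ᵥ z)) * phiN z) =
      fun z => c * phiN z + ∑ i, v i * (z i * phiN z)
        + ∑ i, ∑ j, A i j * (z i * z j * phiN z) := by
    funext z
    simp only [dotProduct, mulVec, add_mul, Finset.sum_mul, Finset.mul_sum]
    congr 1
    · congr 1
      exact Finset.sum_congr rfl fun i _ => by ring
    · exact Finset.sum_congr rfl fun i _ => Finset.sum_congr rfl fun j _ => by ring
  have i0 : Integrable (fun z : Fin n → ℝ => c * phiN z) := phiN_int0.const_mul c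
  have i1 : ∀ i, Integrable (fun z : Fin n → ℝ => v i * (z i * phiN z)) :=
    fun i => (phiN_int1 i).const_mul _
  have i2 : ∀ i j, Integrable (fun z : Fin n → ℝ => A i j * (z i * z j * phiN z)) :=
    fun i j => (phiN_int2 i j).const_mul _
  have i1' := integrable_finsetSum Finset.univ fun i _ => i1 i
  have i2' := fun i => integrable_finsetSum Finset.univ fun j _ => i2 i j
  have i2'' := integrable_finsetSum Finset.univ fun i _ => i2' i
  have i01 : Integrable (fun z : Fin n → ℝ => c * phiN z + ∑ i, v i * (z i * phiN z)) :=
    i0.add i1'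
  rw [e, integral_add i01 i2'', integral_add i0 i1',
    integral_finsetSum _ fun i _ => i1 i, integral_finsetSum _ fun i _ => i2' i]
  simp_rw [integral_finsetSum _ fun j _ => i2 _ j, integral_const_mul, phiN_mom0, phiN_mom1,
    phiN_mom2]
  simp [Matrix.trace]

lemma integral_lin {n : ℕ} (L : Matrix (Fin n) (Fin n) ℝ) (hL : L.det ≠ 0)
    (F : (Fin n → ℝ) → ℝ) (hF : Continuous F) :
    ∫ x, F x = |L.det| * ∫ z, F (L *ᵥ z) := by
  have h := Real.map_matrix_volume_pi_eq_smul_volume_pi hL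
  have h2 : ∫ x, F x ∂(Measure.map (toLin' L) volume) = ∫ z, F (L *ᵥ z) := by
    rw [integral_map]
    · simp
    · exact (LinearMap.continuous_of_finiteDimensional (toLin' L)).aemeasurable
    · exact hF.aestronglyMeasurable
  rw [← h2, h, integral_smul_measure, ENNReal.toReal_ofReal (abs_nonneg _), smul_eq_mul,
    ← mul_assoc, ← abs_mul, mul_inv_cancel₀ hL]
  simp

lemma gaussPdf_cont {n : ℕ} (μ : Fin n → ℝ) (S : Matrix (Fin n) (Fin n) ℝ) :
    Continuous (gaussPdf μ S) := by
  unfold gaussPdf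
  fun_prop

lemma gaussPdf_lin {n : ℕ} (S L : Matrix (Fin n) (Fin n) ℝ) (hS : S = L * Lᵀ)
    (hL : L.det ≠ 0) (z : Fin n → ℝ) :
    |L.det| * gaussPdf 0 S (L *ᵥ z) = phiN z := by
  have hLu : IsUnit L.det := isUnit_iff_ne_zero.2 hL
  have hq : (L *ᵥ z) ⬝ᵥ (S⁻¹ *ᵥ (L *ᵥ z)) = ∑ k, z k ^ 2 := by
    have h1 : S⁻¹ *ᵥ (L *ᵥ z) = Lᵀ⁻¹ *ᵥ z := by
      rw [hS, Matrix.mul_inv_rev, mulVec_mulVec, Matrix.mul_assoc, nonsing_inv_mul _ hLu,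
        Matrix.mul_one]
    rw [h1, dotProduct_mulVec, ← Matrix.transpose_nonsing_inv, vecMul_transpose,
      mulVec_mulVec, nonsing_inv_mul _ hLu, one_mulVec]
    simp [dotProduct, sq]
  have hd : S.det = L.det ^ 2 := by rw [hS, det_mul, det_transpose, sq]
  unfold gaussPdf phiN
  rw [sub_zero, hq, hd, Real.sqrt_mul (by positivity), Real.sqrt_sq_eq_abs]
  have hp : ∀ x, phi x = (√(2 * π))⁻¹ * Real.exp (-(1/2) * x ^ 2) := by
    intro x
    simp only [phi, ProbabilityTheory.gaussianPDFReal]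
    congr 2 <;> simp
    ring
  simp_rw [hp]
  rw [Finset.prod_mul_distrib, ← Real.exp_sum, ← Finset.mul_sum, Finset.prod_const,
    Finset.card_univ, Fintype.card_fin, inv_pow]
  have : √((2 * π) ^ n) = √(2 * π) ^ n := by
    rw [Real.sqrt_eq_iff_mul_self_eq (by positivity) (by positivity), ← mul_pow,
      Real.mul_self_sqrt (by positivity)]
  rw [this]
  have : |L.det| ≠ 0 := abs_ne_zero.2 hL
  field_simp

lemma gauss_quad {n : ℕ} (μ : Fin n → ℝ) (S : Matrix (Fin n) (Fin n) ℝ) (hS : S.PosDef)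
    (c : ℝ) (v : Fin n → ℝ) (A : Matrix (Fin n) (Fin n) ℝ) :
    ∫ x : Fin n → ℝ, (c + v ⬝ᵥ (x - μ) + (x - μ) ⬝ᵥ (A *ᵥ (x - μ))) * gaussPdf μ S x
      = c + (A * S).trace := by
  obtain ⟨L, hSL, hL⟩ : ∃ L : Matrix (Fin n) (Fin n) ℝ, S = L * Lᵀ ∧ L.det ≠ 0 := by
    obtain ⟨B, hB⟩ := (by open scoped MatrixOrder ComplexOrder in
      exact CStarAlgebra.nonneg_iff_eq_star_mul_self.mp hS.posSemidef.nonneg :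
        ∃ B : Matrix (Fin n) (Fin n) ℝ, S = star B * B)
    have hB' : S = Bᵀ * Bᵀᵀ := by
      rw [hB, Matrix.star_eq_conjTranspose, conjTranspose_eq_transpose_of_trivial,
        transpose_transpose]
    refine ⟨Bᵀ, hB', fun h => ?_⟩
    have := hS.det_pos
    rw [hB', det_mul, h, zero_mul] at this
    exact lt_irrefl _ this
  have h0 : ∀ x, gaussPdf μ S x = gaussPdf 0 S (x - μ) := by intro x; simp [gaussPdf]
  simp_rw [h0]
  rw [integral_sub_right_eq_self
    (fun x => (c + v ⬝ᵥ x + x ⬝ᵥ (A *ᵥ x)) * gaussPdf 0 S x) μ, integral_lin L hL _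
    (by have := gaussPdf_cont 0 S; fun_prop), ← integral_const_mul]
  have e : ∀ z, |L.det| * ((c + v ⬝ᵥ (L *ᵥ z) + (L *ᵥ z) ⬝ᵥ (A *ᵥ (L *ᵥ z))) *
      gaussPdf 0 S (L *ᵥ z)) = (c + (v ᵥ* L) ⬝ᵥ z + z ⬝ᵥ ((Lᵀ * A * L) *ᵥ z)) * phiN z := by
    intro z
    rw [← gaussPdf_lin S L hSL hL, dotProduct_mulVec]
    have : (L *ᵥ z) ⬝ᵥ (A *ᵥ (L *ᵥ z)) = z ⬝ᵥ ((Lᵀ * A * L) *ᵥ z) := by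
      rw [← mulVec_mulVec, ← mulVec_mulVec, dotProduct_mulVec z, vecMul_transpose]
    rw [this]; ring
  simp_rw [e]
  rw [phiN_quad, hSL, Matrix.mul_assoc, Matrix.trace_mul_comm, Matrix.mul_assoc]

lemma log_gaussPdf {n : ℕ} (μ : Fin n → ℝ) (S : Matrix (Fin n) (Fin n) ℝ) (hS : S.PosDef)
    (x : Fin n → ℝ) : Real.log (gaussPdf μ S x) =
      -(1/2) * (Real.log ((2 * π) ^ n) + Real.log S.det)
        - (1/2) * ((x - μ) ⬝ᵥ (S⁻¹ *ᵥ (x - μ))) := by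
  have hd := hS.det_pos
  have hp : 0 < (2 * π) ^ n := by positivity
  unfold gaussPdf
  rw [Real.log_mul (by positivity) (by positivity), Real.log_exp, Real.log_inv,
    Real.log_sqrt (by positivity), Real.log_mul hp.ne' hd.ne']
  ring

lemma gaussPdf_ne {n : ℕ} (μ : Fin n → ℝ) (S : Matrix (Fin n) (Fin n) ℝ) (hS : S.PosDef)
    (x : Fin n → ℝ) : gaussPdf μ S x ≠ 0 := by
  have hd := hS.det_pos
  unfold gaussPdf
  positivity

/-- KL divergence between Gaussians, as the defining integral. -/
lemma kl_gauss {n : ℕ} (μ ν : Fin n → ℝ) (S T : Matrix (Fin n) (Fin n) ℝ) (hS : S.PosDef)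
    (hT : T.PosDef) :
    ∫ m : Fin n → ℝ, Real.log (gaussPdf μ S m / gaussPdf ν T m) * gaussPdf μ S m =
      (1/2) * (Real.log T.det - Real.log S.det) + (1/2) * ((μ - ν) ⬝ᵥ (T⁻¹ *ᵥ (μ - ν)))
        + (1/2) * (T⁻¹ * S).trace - (1/2) * n := by
  have e : ∀ m, Real.log (gaussPdf μ S m / gaussPdf ν T m) =
      ((1/2) * (Real.log T.det - Real.log S.det) + (1/2) * ((μ - ν) ⬝ᵥ (T⁻¹ *ᵥ (μ - ν))))
      + ((1/2 : ℝ) • ((μ - ν) ᵥ* T⁻¹ + T⁻¹ *ᵥ (μ - ν))) ⬝ᵥ (m - μ)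
      + (m - μ) ⬝ᵥ (((1/2 : ℝ) • (T⁻¹ - S⁻¹)) *ᵥ (m - μ)) := by
    intro m
    rw [Real.log_div (gaussPdf_ne μ S hS m) (gaussPdf_ne ν T hT m), log_gaussPdf μ S hS,
      log_gaussPdf ν T hT]
    have : m - ν = (m - μ) + (μ - ν) := by abel
    rw [this]
    generalize m - μ = a
    generalize μ - ν = b
    simp only [mulVec_add, dotProduct_add, add_dotProduct, smul_mulVec, sub_mulVec,
      dotProduct_smul, smul_dotProduct, dotProduct_sub, smul_eq_mul, ← dotProduct_mulVec]
    rw [dotProduct_comm (T⁻¹ *ᵥ b) a]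
    ring
  simp_rw [e]
  rw [gauss_quad μ S hS]
  have hu : IsUnit S.det := isUnit_iff_ne_zero.2 hS.det_pos.ne'
  rw [smul_mul, sub_mul, nonsing_inv_mul _ hu, trace_smul, trace_sub, trace_one]
  simp
  ring

/-- In the linear conjugate-Gaussian setting, the expected information gain, the
expectation over the marginal of the data y of the KL divergence from the prior to
the posterior, equals ½ log det(Gᵀ Se⁻¹ G Spr + I). -/
theorem expected_information_gain {d q : ℕ}
    (G : Matrix (Fin q) (Fin d) ℝ)
    (Spr : Matrix (Fin d) (Fin d) ℝ) (Se : Matrix (Fin q) (Fin q) ℝ)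
    (hpr : Spr.PosDef) (hε : Se.PosDef)
    (μpr : Fin d → ℝ)
    (Spos : Matrix (Fin d) (Fin d) ℝ)
    (hSpos : Spos = (Gᵀ * Se⁻¹ * G + Spr⁻¹)⁻¹)
    (μpos : (Fin q → ℝ) → (Fin d → ℝ))
    (hμpos : ∀ y, μpos y = Spos *ᵥ (Spr⁻¹ *ᵥ μpr + Gᵀ *ᵥ (Se⁻¹ *ᵥ y))) :
    (∫ y : Fin q → ℝ,
        (∫ m : Fin d → ℝ,
          Real.log (gaussPdf (μpos y) Spos m / gaussPdf μpr Spr m) *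
            gaussPdf (μpos y) Spos m) *
        gaussPdf (G *ᵥ μpr) (G * Spr * Gᵀ + Se) y) =
      (1/2) * Real.log (Gᵀ * Se⁻¹ * G * Spr + 1).det := by
  have hHpd : (Gᵀ * Se⁻¹ * G + Spr⁻¹).PosDef := by
    have := hε.inv.posSemidef.conjTranspose_mul_mul_same G
    rw [conjTranspose_eq_transpose_of_trivial] at this
    exact Matrix.PosDef.posSemidef_add this hpr.inv
  have hSy : (G * Spr * Gᵀ + Se).PosDef := by
    have := hpr.posSemidef.mul_mul_conjTranspose_same G
    rw [conjTranspose_eq_transpose_of_trivial] at this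
    exact Matrix.PosDef.posSemidef_add this hε
  have hSpd : Spos.PosDef := hSpos ▸ hHpd.inv
  have uHr : IsUnit (Gᵀ * Se⁻¹ * G + Spr⁻¹).det := isUnit_iff_ne_zero.2 hHpd.det_pos.ne'
  have upr : IsUnit Spr.det := isUnit_iff_ne_zero.2 hpr.det_pos.ne'
  have ue : IsUnit Se.det := isUnit_iff_ne_zero.2 hε.det_pos.ne'
  have hSH : Spos * (Gᵀ * Se⁻¹ * G + Spr⁻¹) = 1 := by rw [hSpos, nonsing_inv_mul _ uHr]
  have hHS : (Gᵀ * Se⁻¹ * G + Spr⁻¹) * Spos = 1 := by rw [hSpos, mul_nonsing_inv _ uHr]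
  have sSpos : Sposᵀ = Spos := by
    have := hSpd.isHermitian.eq
    rwa [conjTranspose_eq_transpose_of_trivial] at this
  have sSe : Se⁻¹ᵀ = Se⁻¹ := by
    have := hε.inv.isHermitian.eq
    rwa [conjTranspose_eq_transpose_of_trivial] at this
  -- the gain matrix
  obtain ⟨K, hK⟩ : ∃ K, K = Spos * Gᵀ * Se⁻¹ := ⟨_, rfl⟩
  have hKy : ∀ y, μpos y - μpr = K *ᵥ (y - G *ᵥ μpr) := by
    intro y
    have h1 : μpr = Spos *ᵥ ((Gᵀ * Se⁻¹ * G + Spr⁻¹) *ᵥ μpr) := by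
      rw [mulVec_mulVec, hSH, one_mulVec]
    rw [hμpos]
    nth_rewrite 2 [h1]
    rw [hK, ← mulVec_sub, add_mulVec, mulVec_sub]
    simp only [← mulVec_mulVec, mulVec_add, mulVec_sub]
    abel
  have hKS : K * (G * Spr * Gᵀ + Se) = Spr * Gᵀ := by
    have h1 : K * (G * Spr * Gᵀ + Se) =
        Spos * (Gᵀ * Se⁻¹ * G + Spr⁻¹) * (Spr * Gᵀ) := by
      have a1 : Spr⁻¹ * (Spr * Gᵀ) = Gᵀ := by
        rw [← Matrix.mul_assoc, nonsing_inv_mul _ upr, Matrix.one_mul]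
      have a2 : Se⁻¹ * Se = 1 := nonsing_inv_mul _ ue
      rw [hK]
      simp only [Matrix.mul_add, Matrix.add_mul, Matrix.mul_assoc, a1, a2, Matrix.mul_one]
    rw [h1, hSH, Matrix.one_mul]
  have hKSK : K * (G * Spr * Gᵀ + Se) * Kᵀ = Spr - Spos := by
    have h2 : Spr * (Gᵀ * Se⁻¹ * G + Spr⁻¹) * Spos = Spr := by
      rw [Matrix.mul_assoc, hHS, Matrix.mul_one]
    rw [Matrix.mul_add, mul_nonsing_inv _ upr, Matrix.add_mul, Matrix.one_mul] at h2
    rw [hKS, hK, eq_sub_iff_add_eq]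
    simp only [transpose_mul, transpose_transpose, sSe, sSpos]
    simp only [Matrix.mul_assoc] at h2 ⊢
    exact h2
  have e : ∀ y, ∫ m : Fin d → ℝ,
          Real.log (gaussPdf (μpos y) Spos m / gaussPdf μpr Spr m) *
            gaussPdf (μpos y) Spos m =
      ((1/2) * (Real.log Spr.det - Real.log Spos.det) + (1/2) * (Spr⁻¹ * Spos).trace
        - (1/2) * d) + (0 : Fin q → ℝ) ⬝ᵥ (y - G *ᵥ μpr)
        + (y - G *ᵥ μpr) ⬝ᵥ (((1/2 : ℝ) • (Kᵀ * Spr⁻¹ * K)) *ᵥ (y - G *ᵥ μpr)) := by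
    intro y
    rw [kl_gauss _ _ _ _ hSpd hpr, hKy]
    generalize y - G *ᵥ μpr = a
    have : (K *ᵥ a) ⬝ᵥ (Spr⁻¹ *ᵥ (K *ᵥ a)) = a ⬝ᵥ ((Kᵀ * Spr⁻¹ * K) *ᵥ a) := by
      rw [← mulVec_mulVec, ← mulVec_mulVec, dotProduct_mulVec a, vecMul_transpose]
    rw [this, smul_mulVec, dotProduct_smul, zero_dotProduct, smul_eq_mul]
    ring
  simp_rw [e]
  rw [gauss_quad _ _ hSy]
  have ht : (Kᵀ * Spr⁻¹ * K * (G * Spr * Gᵀ + Se)).trace = d - (Spr⁻¹ * Spos).trace := by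
    rw [Matrix.mul_assoc, Matrix.mul_assoc, Matrix.trace_mul_comm, Matrix.mul_assoc, hKSK,
      Matrix.mul_sub, nonsing_inv_mul _ upr, trace_sub, trace_one, Fintype.card_fin]
  have hdet : (Gᵀ * Se⁻¹ * G * Spr + 1).det = (Spos.det)⁻¹ * Spr.det := by
    have : Gᵀ * Se⁻¹ * G * Spr + 1 = (Gᵀ * Se⁻¹ * G + Spr⁻¹) * Spr := by
      rw [Matrix.add_mul, nonsing_inv_mul _ upr]
    have h3 : (Gᵀ * Se⁻¹ * G + Spr⁻¹).det * Spos.det = 1 := by rw [← det_mul, hHS, det_one]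
    rw [this, det_mul, eq_inv_of_mul_eq_one_left h3]
  rw [smul_mul, trace_smul, ht, hdet, Real.log_mul (inv_ne_zero hSpd.det_pos.ne')
    hpr.det_pos.ne', Real.log_inv, smul_eq_mul]
  ring
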